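/- Let n ≥ 2 and let U = I₁×⋯×Iₙ ⊆ ℝⁿ be an open box carrying a diagonal metric with smooth positive Lamé coefficients H₁,…,Hₙ, h = H₁⋯Hₙ, and Δψ = h⁻¹ ∑ᵢ ∂ᵢ((h/Hᵢ²)∂ᵢψ). Let R : U → ℝ be smooth and positive, and suppose there are continuous pᵢ, qᵢ : Iᵢ → ℝ with ∂ᵢ ln(R² h/Hᵢ²)(u) = pᵢ(uⁱ) on U and R⁻¹ΔR − ∑ᵢ qᵢ(uⁱ)/Hᵢ² = 0 on U (so the metric is R-separable in the Laplace equation Δψ = 0). Then for any continuous v₁,…,vₙ : Iᵢ → ℝ, setting V(u) = ∑ᵢ vᵢ(uⁱ)/Hᵢ², the following holds: whenever φᵢ : Iᵢ → ℝ are C² with φᵢ'' + pᵢφᵢ' + (qᵢ − vᵢ)φᵢ = 0, the function ψ(u) = R(u)·∏ᵢ φᵢ(uⁱ) satisfies Δψ = Vψ on U. -/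

import Mathlib

/-- The partial derivative of `f : ℝⁿ → ℝ` in the `i`-th coordinate direction,
taken as a line (directional) derivative. -/
noncomputable def pd {n : ℕ} (i : Fin n) (f : (Fin n → ℝ) → ℝ) (x : Fin n → ℝ) : ℝ :=
  lineDeriv ℝ f x (Pi.single i 1)

/-!
Where `a` is differentiable and `r`, `f` are `C²`, the product rule gives the gauge identity
`∂(a ∂(r f)) = f ∂(a ∂r) + a r (∂²f + ∂ log(r² a) ∂f)`.
With `a = h / Hᵢ²`, `r = R` and `f = ∏ⱼ φⱼ(uʲ)`, the first separability condition turns the last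
bracket into `∂ᵢ²f + pᵢ ∂ᵢf`, which the ODE for `φᵢ` replaces by `-(qᵢ - vᵢ) f`. Summing over `i`,
the terms `qᵢ / Hᵢ²` cancel against `R⁻¹ΔR`, and only those with `vᵢ` survive.
-/

open Finset Function Topology

section LineDeriv

variable {𝕜 E : Type*} [NontriviallyNormedField 𝕜] [AddCommGroup E]

lemma lineDeriv_mul [Module 𝕜 E] {f g : E → 𝕜} {x e : E}
    (hf : LineDifferentiableAt 𝕜 f x e) (hg : LineDifferentiableAt 𝕜 g x e) :
    lineDeriv 𝕜 (fun y ↦ f y * g y) x e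
      = lineDeriv 𝕜 f x e * g x + f x * lineDeriv 𝕜 g x e := by
  simpa [lineDeriv] using deriv_fun_mul hf hg

lemma lineDeriv_log [Module ℝ E] {f : E → ℝ} {x e : E}
    (hf : LineDifferentiableAt ℝ f x e) (hx : f x ≠ 0) :
    lineDeriv ℝ (fun y ↦ Real.log (f y)) x e = lineDeriv ℝ f x e / f x := by
  simpa [lineDeriv] using deriv.log hf (by simpa using hx)

lemma lineDeriv_log_sq_mul [Module ℝ E] {a r : E → ℝ} {x e : E}
    (ha : LineDifferentiableAt ℝ a x e) (hr : LineDifferentiableAt ℝ r x e)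
    (ha₀ : a x ≠ 0) (hr₀ : r x ≠ 0) :
    a x * r x * lineDeriv ℝ (fun y ↦ Real.log (r y ^ 2 * a y)) x e
      = 2 * a x * lineDeriv ℝ r x e + lineDeriv ℝ a x e * r x := by
  have hsq : lineDeriv ℝ (fun y ↦ r y ^ 2) x e = 2 * r x * lineDeriv ℝ r x e := by
    simp only [pow_two, lineDeriv_mul hr hr]
    ring
  have hr_sq : LineDifferentiableAt ℝ (fun y ↦ r y ^ 2) x e := DifferentiableAt.fun_pow hr 2
  have hlog := lineDeriv_log (f := fun y ↦ r y ^ 2 * a y) (DifferentiableAt.fun_mul hr_sq ha)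
    (mul_ne_zero (pow_ne_zero 2 hr₀) ha₀)
  rw [hlog, lineDeriv_mul hr_sq ha, hsq]
  field_simp

end LineDeriv

section SecondOrder

variable {𝕜 E : Type*} [NontriviallyNormedField 𝕜] [NormedAddCommGroup E]

lemma differentiableAt_lineDeriv [NormedSpace 𝕜 E] {f : E → 𝕜} {x : E} (e : E)
    (hf : ContDiffAt 𝕜 2 f x) : DifferentiableAt 𝕜 (fun y ↦ lineDeriv 𝕜 f y e) x := by
  have hfderiv : DifferentiableAt 𝕜 (fun y ↦ fderiv 𝕜 f y e) x :=
    ((hf.fderiv_right (m := 1) (by norm_num)).differentiableAt one_ne_zero).clm_apply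
      (differentiableAt_const e)
  refine hfderiv.congr_of_eventuallyEq ?_
  filter_upwards [hf.eventually (by simp)] with y hy
  exact (hy.differentiableAt two_ne_zero).lineDeriv_eq_fderiv

lemma lineDeriv_mul_lineDeriv_mul [NormedSpace 𝕜 E] {a r f : E → 𝕜} {x : E} (e : E)
    (ha : DifferentiableAt 𝕜 a x) (hr : ContDiffAt 𝕜 2 r x) (hf : ContDiffAt 𝕜 2 f x) :
    lineDeriv 𝕜 (fun y ↦ a y * lineDeriv 𝕜 (fun z ↦ r z * f z) y e) x e
      = f x * lineDeriv 𝕜 (fun y ↦ a y * lineDeriv 𝕜 r y e) x e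
        + a x * r x * lineDeriv 𝕜 (fun y ↦ lineDeriv 𝕜 f y e) x e
        + (2 * a x * lineDeriv 𝕜 r x e + lineDeriv 𝕜 a x e * r x) * lineDeriv 𝕜 f x e := by
  have hr₁ := hr.differentiableAt two_ne_zero
  have hf₁ := hf.differentiableAt two_ne_zero
  have hr₂ := differentiableAt_lineDeriv e hr
  have hf₂ := differentiableAt_lineDeriv e hf
  have leibniz : (fun y ↦ a y * lineDeriv 𝕜 (fun z ↦ r z * f z) y e) =ᶠ[𝓝 x]
      fun y ↦ a y * (lineDeriv 𝕜 r y e * f y + r y * lineDeriv 𝕜 f y e) := by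
    filter_upwards [hr.eventually (by simp), hf.eventually (by simp)] with y hry hfy
    rw [lineDeriv_mul (hry.differentiableAt two_ne_zero).lineDifferentiableAt
      (hfy.differentiableAt two_ne_zero).lineDifferentiableAt]
  have hsum : lineDeriv 𝕜 (fun y ↦ lineDeriv 𝕜 r y e * f y + r y * lineDeriv 𝕜 f y e) x e
      = lineDeriv 𝕜 (fun y ↦ lineDeriv 𝕜 r y e * f y) x e
        + lineDeriv 𝕜 (fun y ↦ r y * lineDeriv 𝕜 f y e) x e :=
    deriv_fun_add (hr₂.fun_mul hf₁).lineDifferentiableAt (hr₁.fun_mul hf₂).lineDifferentiableAt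
  rw [leibniz.lineDeriv_eq,
    lineDeriv_mul ha.lineDifferentiableAt
      ((hr₂.fun_mul hf₁).fun_add (hr₁.fun_mul hf₂)).lineDifferentiableAt, hsum,
    lineDeriv_mul hr₂.lineDifferentiableAt hf₁.lineDifferentiableAt,
    lineDeriv_mul hr₁.lineDifferentiableAt hf₂.lineDifferentiableAt,
    lineDeriv_mul ha.lineDifferentiableAt hr₂.lineDifferentiableAt]
  ring

lemma lineDeriv_mul_lineDeriv_mul_eq_log [NormedSpace ℝ E] {a r f : E → ℝ} {x : E} (e : E)
    (ha : DifferentiableAt ℝ a x) (hr : ContDiffAt ℝ 2 r x) (hf : ContDiffAt ℝ 2 f x)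
    (ha₀ : a x ≠ 0) (hr₀ : r x ≠ 0) :
    lineDeriv ℝ (fun y ↦ a y * lineDeriv ℝ (fun z ↦ r z * f z) y e) x e
      = f x * lineDeriv ℝ (fun y ↦ a y * lineDeriv ℝ r y e) x e
        + a x * r x * (lineDeriv ℝ (fun y ↦ lineDeriv ℝ f y e) x e
          + lineDeriv ℝ (fun y ↦ Real.log (r y ^ 2 * a y)) x e * lineDeriv ℝ f x e) := by
  rw [lineDeriv_mul_lineDeriv_mul e ha hr hf, ← lineDeriv_log_sq_mul ha.lineDifferentiableAt
    (hr.differentiableAt two_ne_zero).lineDifferentiableAt ha₀ hr₀]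
  ring

end SecondOrder

section SeparatedProduct

variable {𝕜 ι : Type*} [NontriviallyNormedField 𝕜] [Fintype ι]

/-- The product `u ↦ ∏ᵢ φᵢ(uⁱ)` of functions of one coordinate each, i.e. the separated factor of
an `R`-separated solution. -/
def separatedProduct (φ : ι → 𝕜 → 𝕜) (u : ι → 𝕜) : 𝕜 :=
  ∏ i, φ i (u i)

lemma contDiffAt_separatedProduct {φ : ι → 𝕜 → 𝕜} {u : ι → 𝕜} {k : WithTop ℕ∞}
    (hφ : ∀ i, ContDiffAt 𝕜 k (φ i) (u i)) : ContDiffAt 𝕜 k (separatedProduct φ) u :=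
  contDiffAt_prod fun i _ ↦ (hφ i).comp u (contDiff_apply 𝕜 𝕜 i).contDiffAt

variable [DecidableEq ι]

lemma separatedProduct_update (φ : ι → 𝕜 → 𝕜) (i : ι) (g : 𝕜 → 𝕜) (u : ι → 𝕜) :
    separatedProduct (update φ i g) u = g (u i) * ∏ j ∈ univ.erase i, φ j (u j) := by
  rw [separatedProduct, ← mul_prod_erase _ _ (mem_univ i), update_self]
  congr 1
  exact prod_congr rfl fun j hj ↦ by rw [update_of_ne (ne_of_mem_erase hj)]

lemma separatedProduct_add_smul_single (φ : ι → 𝕜 → 𝕜) (i : ι) (u : ι → 𝕜) (t : 𝕜) :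
    separatedProduct φ (u + t • Pi.single i 1)
      = φ i (u i + t) * ∏ j ∈ univ.erase i, φ j (u j) := by
  rw [separatedProduct, ← mul_prod_erase _ _ (mem_univ i)]
  congr 1
  · simp
  · exact prod_congr rfl fun j hj ↦ by simp [ne_of_mem_erase hj]

lemma lineDeriv_separatedProduct (φ : ι → 𝕜 → 𝕜) (i : ι) (u : ι → 𝕜) :
    lineDeriv 𝕜 (separatedProduct φ) u (Pi.single i 1)
      = separatedProduct (update φ i (deriv (φ i))) u := by
  simp only [lineDeriv, separatedProduct_add_smul_single, separatedProduct_update]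
  rw [deriv_mul_const_field, deriv_comp_const_add, add_zero]

lemma lineDeriv_lineDeriv_separatedProduct (φ : ι → 𝕜 → 𝕜) (i : ι) (u : ι → 𝕜) :
    lineDeriv 𝕜 (fun w ↦ lineDeriv 𝕜 (separatedProduct φ) w (Pi.single i 1)) u (Pi.single i 1)
      = separatedProduct (update φ i (deriv (deriv (φ i)))) u := by
  simp only [lineDeriv_separatedProduct, update_self, update_idem]

lemma lineDeriv_lineDeriv_separatedProduct_add_of_ode {φ : ι → 𝕜 → 𝕜} {i : ι} {u : ι → 𝕜} {b c : 𝕜}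
    (hode : deriv (deriv (φ i)) (u i) + b * deriv (φ i) (u i) + c * φ i (u i) = 0) :
    lineDeriv 𝕜 (fun w ↦ lineDeriv 𝕜 (separatedProduct φ) w (Pi.single i 1)) u (Pi.single i 1)
      + b * lineDeriv 𝕜 (separatedProduct φ) u (Pi.single i 1)
      = -c * separatedProduct φ u := by
  have hφ := separatedProduct_update φ i (φ i) u
  rw [update_eq_self] at hφ
  rw [lineDeriv_lineDeriv_separatedProduct, lineDeriv_separatedProduct, separatedProduct_update,
    separatedProduct_update, hφ]
  linear_combination (∏ j ∈ univ.erase i, φ j (u j)) * hode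

end SeparatedProduct

section Separation

variable {n : ℕ}

/-- The diagonal divergence-form operator `f ↦ ∑ᵢ ∂ᵢ(aᵢ ∂ᵢf)`. -/
noncomputable def diagDivGrad (a : Fin n → (Fin n → ℝ) → ℝ) (f : (Fin n → ℝ) → ℝ)
    (u : Fin n → ℝ) : ℝ :=
  ∑ i, pd i (fun w ↦ a i w * pd i f w) u

/-- The Laplace–Beltrami operator `f ↦ h⁻¹ ∑ᵢ ∂ᵢ((h / Hᵢ²) ∂ᵢf)`, `h = ∏ᵢ Hᵢ`, of the diagonal
metric `∑ᵢ Hᵢ² (duⁱ)²`. -/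
noncomputable def laplaceBeltrami (H : Fin n → (Fin n → ℝ) → ℝ) (f : (Fin n → ℝ) → ℝ)
    (u : Fin n → ℝ) : ℝ :=
  (∏ i, H i u)⁻¹ * diagDivGrad (fun i w ↦ (∏ j, H j w) / H i w ^ 2) f u

lemma diagDivGrad_mul_separatedProduct {a : Fin n → (Fin n → ℝ) → ℝ} {R : (Fin n → ℝ) → ℝ}
    {φ : Fin n → ℝ → ℝ} {u : Fin n → ℝ} {c : Fin n → ℝ}
    (ha : ∀ i, DifferentiableAt ℝ (a i) u) (ha₀ : ∀ i, a i u ≠ 0)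
    (hR : ContDiffAt ℝ 2 R u) (hR₀ : R u ≠ 0) (hφ : ∀ i, ContDiffAt ℝ 2 (φ i) (u i))
    (hode : ∀ i, deriv (deriv (φ i)) (u i)
      + pd i (fun w ↦ Real.log (R w ^ 2 * a i w)) u * deriv (φ i) (u i) + c i * φ i (u i) = 0) :
    diagDivGrad a (fun w ↦ R w * separatedProduct φ w) u
      = separatedProduct φ u * (diagDivGrad a R u - R u * ∑ i, a i u * c i) := by
  have hterm (i : Fin n) :
      pd i (fun w ↦ a i w * pd i (fun z ↦ R z * separatedProduct φ z) w) u
        = separatedProduct φ u * (pd i (fun w ↦ a i w * pd i R w) u - R u * (a i u * c i)) := by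
    have hgauge := lineDeriv_mul_lineDeriv_mul_eq_log (Pi.single i 1) (ha i) hR
      (contDiffAt_separatedProduct hφ) (ha₀ i) hR₀
    have hsep := lineDeriv_lineDeriv_separatedProduct_add_of_ode (hode i)
    unfold pd at hsep ⊢
    rw [hgauge, hsep]
    ring
  simp only [diagDivGrad, hterm, ← mul_sum, sum_sub_distrib]

lemma laplaceBeltrami_mul_separatedProduct {H : Fin n → (Fin n → ℝ) → ℝ} {R : (Fin n → ℝ) → ℝ}
    {φ : Fin n → ℝ → ℝ} {u : Fin n → ℝ} {c : Fin n → ℝ}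
    (hH : ∀ i, DifferentiableAt ℝ (H i) u) (hH₀ : ∀ i, H i u ≠ 0)
    (hR : ContDiffAt ℝ 2 R u) (hR₀ : R u ≠ 0) (hφ : ∀ i, ContDiffAt ℝ 2 (φ i) (u i))
    (hode : ∀ i, deriv (deriv (φ i)) (u i)
      + pd i (fun w ↦ Real.log (R w ^ 2 * (∏ j, H j w) / H i w ^ 2)) u * deriv (φ i) (u i)
      + c i * φ i (u i) = 0) :
    laplaceBeltrami H (fun w ↦ R w * separatedProduct φ w) u
      = separatedProduct φ u * (laplaceBeltrami H R u - R u * ∑ i, c i / H i u ^ 2) := by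
  have hh₀ : ∏ i, H i u ≠ 0 := prod_ne_zero_iff.2 fun i _ ↦ hH₀ i
  have ha (i : Fin n) : DifferentiableAt ℝ (fun w ↦ (∏ j, H j w) / H i w ^ 2) u := by
    fun_prop (disch := exact pow_ne_zero 2 (hH₀ i))
  simp only [mul_div_assoc] at hode
  have hdiv := diagDivGrad_mul_separatedProduct ha
    (fun i ↦ div_ne_zero hh₀ (pow_ne_zero 2 (hH₀ i))) hR hR₀ hφ hode
  have hsum : ∑ i, (∏ j, H j u) / H i u ^ 2 * c i = (∏ j, H j u) * ∑ i, c i / H i u ^ 2 := by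
    rw [mul_sum]
    exact sum_congr rfl fun i _ ↦ by ring
  rw [laplaceBeltrami, laplaceBeltrami, hdiv, hsum]
  field_simp

theorem fixed_energy_R_separation_general {I : Fin n → Set ℝ} (hI : ∀ i, IsOpen (I i))
    {U : Set (Fin n → ℝ)} (hU : IsOpen U) (hUI : ∀ u ∈ U, ∀ i, u i ∈ I i)
    {H : Fin n → (Fin n → ℝ) → ℝ} (hH : ∀ i, DifferentiableOn ℝ (H i) U)
    (hHpos : ∀ i, ∀ u ∈ U, 0 < H i u)
    {R : (Fin n → ℝ) → ℝ} (hR : ContDiffOn ℝ 2 R U) (hR₀ : ∀ u ∈ U, R u ≠ 0)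
    {p q v : Fin n → ℝ → ℝ}
    (hfirst : ∀ i, ∀ u ∈ U,
      pd i (fun w ↦ Real.log (R w ^ 2 * (∏ j, H j w) / H i w ^ 2)) u = p i (u i))
    (hReq : ∀ u ∈ U, (R u)⁻¹ * laplaceBeltrami H R u - ∑ i, q i (u i) / H i u ^ 2 = 0)
    {φ : Fin n → ℝ → ℝ} (hφ : ∀ i, ContDiffOn ℝ 2 (φ i) (I i))
    (hode : ∀ i, ∀ x ∈ I i,
      deriv (deriv (φ i)) x + p i x * deriv (φ i) x + (q i x - v i x) * φ i x = 0)
    {u : Fin n → ℝ} (hu : u ∈ U) :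
    laplaceBeltrami H (fun w ↦ R w * separatedProduct φ w) u
      = (∑ i, v i (u i) / H i u ^ 2) * (R u * separatedProduct φ u) := by
  have hLaplaceR : laplaceBeltrami H R u = R u * ∑ i, q i (u i) / H i u ^ 2 :=
    (inv_mul_eq_iff_eq_mul₀ (hR₀ u hu)).1 (sub_eq_zero.1 (hReq u hu))
  rw [laplaceBeltrami_mul_separatedProduct (c := fun i ↦ q i (u i) - v i (u i))
    (fun i ↦ (hH i).differentiableAt (hU.mem_nhds hu)) (fun i ↦ (hHpos i u hu).ne')
    (hR.contDiffAt (hU.mem_nhds hu)) (hR₀ u hu)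
    (fun i ↦ (hφ i).contDiffAt ((hI i).mem_nhds (hUI u hu i)))
    (fun i ↦ by rw [hfirst i u hu]; exact hode i (u i) (hUI u hu i)), hLaplaceR]
  simp only [sub_div, sum_sub_distrib]
  ring

end Separation

/-- **Fixed-energy R-separation (Proposition 1).** On an open box `U = I₁ × ⋯ × Iₙ` with
smooth positive Lamé coefficients `Hᵢ`, `h = H₁⋯Hₙ`, `Δψ = h⁻¹ ∑ᵢ ∂ᵢ((h/Hᵢ²)∂ᵢψ)`:
suppose `R` is smooth positive with `∂ᵢ ln(R² h/Hᵢ²) = pᵢ(uⁱ)` and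
`R⁻¹ΔR - ∑ᵢ qᵢ/Hᵢ² = 0` on `U` (R-separability in the Laplace equation). Then for any
continuous `vᵢ`, with `V = ∑ᵢ vᵢ(uⁱ)/Hᵢ²`, every choice of `C²` solutions `φᵢ` of
`φᵢ'' + pᵢφᵢ' + (qᵢ - vᵢ)φᵢ = 0` yields `ψ = R·∏ᵢφᵢ(uⁱ)` with `Δψ = Vψ` on `U`. -/
theorem fixed_energy_R_separation (n : ℕ) (hn : 2 ≤ n)
    (I : Fin n → Set ℝ) (hIo : ∀ i, IsOpen (I i)) (hIc : ∀ i, (I i).OrdConnected)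
    (U : Set (Fin n → ℝ)) (hU : U = {u | ∀ i, u i ∈ I i})
    (H : Fin n → (Fin n → ℝ) → ℝ) (hH : ∀ i, ContDiffOn ℝ (⊤ : ℕ∞) (H i) U)
    (hHpos : ∀ i, ∀ u ∈ U, 0 < H i u)
    (h : (Fin n → ℝ) → ℝ) (hh : ∀ u, h u = ∏ i, H i u)
    (R : (Fin n → ℝ) → ℝ) (hR : ContDiffOn ℝ (⊤ : ℕ∞) R U) (hRpos : ∀ u ∈ U, 0 < R u)
    (p q : Fin n → ℝ → ℝ)
    (hp : ∀ i, ContinuousOn (p i) (I i)) (hq : ∀ i, ContinuousOn (q i) (I i))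
    (hfirst : ∀ i, ∀ u ∈ U,
      pd i (fun v => Real.log (R v ^ 2 * h v / H i v ^ 2)) u = p i (u i))
    (hReq : ∀ u ∈ U,
      (R u)⁻¹ * ((h u)⁻¹ * ∑ i, pd i (fun v => h v / H i v ^ 2 * pd i R v) u)
        - ∑ i, q i (u i) / H i u ^ 2 = 0)
    (v : Fin n → ℝ → ℝ) (hv : ∀ i, ContinuousOn (v i) (I i))
    (V : (Fin n → ℝ) → ℝ) (hV : ∀ u, V u = ∑ i, v i (u i) / H i u ^ 2)
    (φ : Fin n → ℝ → ℝ) (hφ : ∀ i, ContDiffOn ℝ 2 (φ i) (I i))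
    (hode : ∀ i, ∀ x ∈ I i,
      deriv (deriv (φ i)) x + p i x * deriv (φ i) x + (q i x - v i x) * φ i x = 0)
    (ψ : (Fin n → ℝ) → ℝ) (hψ : ∀ u, ψ u = R u * ∏ i, φ i (u i)) :
    ∀ u ∈ U,
      (h u)⁻¹ * ∑ i, pd i (fun v => h v / H i v ^ 2 * pd i ψ v) u = V u * ψ u := by
  obtain rfl : h = fun u ↦ ∏ i, H i u := funext hh
  obtain rfl : ψ = fun u ↦ R u * separatedProduct φ u := funext hψ
  have hUo : IsOpen U := by
    simpa only [hU, Set.pi, Set.mem_univ, true_imp_iff]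
      using isOpen_set_pi Set.finite_univ fun i _ ↦ hIo i
  have two_le_smooth : (2 : WithTop ℕ∞) ≤ (⊤ : ℕ∞) :=
    WithTop.coe_le_coe.2 le_top
  intro u hu
  rw [hV]
  exact fixed_energy_R_separation_general hIo hUo (fun w hw ↦ by rwa [hU] at hw)
    (fun i ↦ (hH i).differentiableOn (by simp)) hHpos (hR.of_le two_le_smooth)
    (fun w hw ↦ (hRpos w hw).ne') hfirst hReq hφ hode hu
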